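/- Suppose 𝓘, 𝓖 are collections of subsets of ℕ and A, B ⊆ ℕ are such that: (a) 𝓘 is countable and downwards ≤_e-closed; (b) 𝓖 is countable, disjoint from 𝓘, and closed under ≡_e; (c) A, B ∈ 𝓘 and B ≰_e A. Then there exists a set Γ ⊆ ℕ, acting as a generalized enumeration operator, such that: (0) Γ ⊕ A ≰_e A; (1) for every X ∈ 𝓘, X ≤_e Γ ⊕ A if and only if X ≤_e A; (2) for every X ∈ 𝓖, X ≰_e Γ ⊕ A; (3) Γ(B) ∉ 𝓘; (4) Γ(B) ≰_e Γ ⊕ A. -/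

import Mathlib

/-!
The set `Γ` is built by forcing. A condition is a pair `(F, C)` with `F ⊆ C ⊆ ℕ`, where `F` is a
finite set of axioms already put into `Γ` and `C` is a primitive recursive set of axioms that are
still allowed, containing all axioms `⟨y, u⟩` with `y` large. A condition speaks about the sets `Γ`
with `F ⊆ Γ ⊆ C`. Countably many dense requirements can be met by one `Γ`
(`Cond.exists_generic`), so it suffices to prove density of each requirement.

* If `X ≰ₑ A`, then `Φ(Γ ⊕ A) ≠ X` is dense (`Cond.force_ne`): since `C` is primitive recursive,
  `Z = Φ(C ⊕ A) ≤ₑ A`, so `Z ≠ X`. An element of `Z \ X` uses only finitely many axioms of `C`,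
  which are added to `F`; an element of `X \ Z` is never enumerated by monotonicity. This yields
  (1), and also (2), because a member of `𝓖` cannot be reducible to `A ∈ 𝓘`.
* `Γ(B) ≠ Φ(Γ ⊕ A)` is dense (`Cond.force_image_ne`): fix a number `x` about which nothing has been
  decided, and let `Cₙ` be `C` with the axioms `⟨x, u⟩` restricted to those with `n ∈ D_u`. The set
  `S = {n | x ∈ Φ(Cₙ ⊕ A)}` satisfies `S ≤ₑ A`, hence `S ≠ B`. If `n ∈ S \ B`, restricting to `Cₙ`
  keeps `x` out of `Γ(B)` while finitely many axioms of `Cₙ` put it into `Φ(Γ ⊕ A)`. If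
  `n ∈ B \ S`, restricting to `Cₙ` keeps `x` out of `Φ(Γ ⊕ A)` while the axiom `⟨x, {n}⟩` puts it
  into `Γ(B)`.
* `Γ(B) ≠ Y` and `Γ ≠ Y` are dense for every `Y`: add the axiom `⟨x, ∅⟩` for an undecided `x`, or
  forbid all axioms `⟨x, u⟩`. For `Y ∈ 𝓘` this yields (3) and `Γ ∉ 𝓘`, whence (0).
-/

def Dset (u : ℕ) : Set ℕ := {i | Nat.testBit u i}

def enumOp (W A : Set ℕ) : Set ℕ := {x | ∃ u, Nat.pair x u ∈ W ∧ Dset u ⊆ A}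

def CE (W : Set ℕ) : Prop := ∃ f : ℕ →. ℕ, Partrec f ∧ W = f.Dom

def EnumRed (A B : Set ℕ) : Prop := ∃ W, CE W ∧ A = enumOp W B

def EnumEq (A B : Set ℕ) : Prop := EnumRed A B ∧ EnumRed B A

def WeStd (e : ℕ) : Set ℕ := {x | ((Denumerable.ofNat Nat.Partrec.Code e).eval x).Dom}

def PhiStd (e : ℕ) : Set ℕ → Set ℕ := enumOp (WeStd e)

def pgraph (φ : ℕ →. ℕ) : Set ℕ := {n | n.unpair.2 ∈ φ n.unpair.1}

def peRed (φ ψ : ℕ →. ℕ) : Prop := EnumRed (pgraph φ) (pgraph ψ)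

def pfAdd (φ ψ : ℕ →. ℕ) : ℕ →. ℕ := fun n => if n % 2 = 0 then φ (n / 2) else ψ (n / 2)

def pfCons (i : ℕ) (φ : ℕ →. ℕ) : ℕ →. ℕ := fun n => if n = 0 then Part.some i else φ (n - 1)

abbrev MassPb := Set (ℕ →. ℕ)

def mpPlus (A B : MassPb) : MassPb := {h | ∃ φ ∈ A, ∃ ψ ∈ B, h = pfAdd φ ψ}

def mpCons (i : ℕ) (A : MassPb) : MassPb := pfCons i '' A

def mpWedge (A B : MassPb) : MassPb := mpCons 0 A ∪ mpCons 1 B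

def mpArrow (A B : MassPb) : MassPb :=
  {h | ∃ e φ, h = pfCons e φ ∧ ∀ ψ ∈ A, ∃ χ ∈ B, pgraph χ = PhiStd e (pgraph (pfAdd φ ψ))}

def DRed (A B : MassPb) : Prop :=
  ∃ W, CE W ∧ ∀ ψ ∈ B, ∃ χ ∈ A, pgraph χ = enumOp W (pgraph ψ)

def DEq (A B : MassPb) : Prop := DRed A B ∧ DRed B A

def DwRed (A B : MassPb) : Prop := ∀ ψ ∈ B, ∃ φ ∈ A, peRed φ ψ

def DwEq (A B : MassPb) : Prop := DwRed A B ∧ DwRed B A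

def UpClosedE (A : MassPb) : Prop := ∀ φ ψ, φ ∈ A → peRed φ ψ → ψ ∈ A

def DMProblem (A : MassPb) : Prop := A.Nonempty ∧ UpClosedE A

def PartCompFn (φ : ℕ →. ℕ) : Prop := CE (pgraph φ)

def oplus (A B : Set ℕ) : Set ℕ := (fun x => 2*x) '' A ∪ (fun x => 2*x+1) '' B

/-- A collection of subsets of `ℕ` is downwards `≤ₑ`-closed. -/
def DownClosedE (I : Set (Set ℕ)) : Prop := ∀ X Y : Set ℕ, EnumRed X Y → Y ∈ I → X ∈ I

/-- A collection of subsets of `ℕ` is closed under `≡ₑ`. -/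
def EClosedEq (G : Set (Set ℕ)) : Prop := ∀ X Y : Set ℕ, EnumEq X Y → X ∈ G → Y ∈ G

/-! ### Computable enumerability and enumeration reductions -/

lemma primrec_two_pow : Primrec (fun n : ℕ => 2 ^ n) := by
  have h : Primrec₂ (fun a b : ℕ => a ^ b) := Primrec₂.unpaired'.1 Nat.Primrec.pow
  exact h.comp (Primrec.const 2) Primrec.id

lemma primrecRel_testBit : PrimrecRel (fun u i : ℕ => Nat.testBit u i = true) := by
  have h : PrimrecRel (fun u i : ℕ => u / 2 ^ i % 2 = 1) :=
    Primrec.eq.comp (Primrec.nat_mod.comp (Primrec.nat_div.comp Primrec.fst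
      (primrec_two_pow.comp Primrec.snd)) (Primrec.const 2)) (Primrec.const 1)
  exact h.of_eq fun u i => by simp [Nat.testBit_eq_decide_div_mod_eq]

lemma primrec_unpair_fst : Primrec (fun m : ℕ => m.unpair.1) :=
  Primrec.fst.comp Primrec.unpair

lemma primrec_unpair_snd : Primrec (fun m : ℕ => m.unpair.2) :=
  Primrec.snd.comp Primrec.unpair

lemma primrecRel_forall_lt {T : ℕ → ℕ × ℕ → Prop} (hT : PrimrecRel T) :
    PrimrecRel (fun m v : ℕ => ∀ i < v, T i (m, v)) := by
  have h : PrimrecPred (fun p : ℕ × ℕ => ∀ i ∈ List.range p.2, T i p) :=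
    (PrimrecRel.forall_mem_list hT).comp (Primrec.list_range.comp Primrec.snd) Primrec.id
  exact h.of_eq fun p => by simp

lemma ce_exists_primrec {P : ℕ → ℕ → Prop} (hP : PrimrecRel P) : CE {m | ∃ s, P m s} := by
  classical
  refine ⟨fun m => Nat.rfind fun s => Part.some (decide (P m s)),
    Partrec.rfind (Computable.partrec (hP.decide.to_comp)).to₂, ?_⟩
  ext m
  change (∃ s, P m s) ↔ (Nat.rfind fun s => Part.some (decide (P m s))).Dom
  refine Iff.trans (exists_congr fun s => ?_) Nat.rfind_dom.symm
  simp

lemma CE.exists_code {W : Set ℕ} (hW : CE W) :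
    ∃ c : Nat.Partrec.Code, W = {m | (c.eval m).Dom} := by
  obtain ⟨f, hf, rfl⟩ := hW
  obtain ⟨c, rfl⟩ := Nat.Partrec.Code.exists_code.1 (Partrec.nat_iff.1 hf)
  exact ⟨c, rfl⟩

lemma countable_ce : {W : Set ℕ | CE W}.Countable := by
  refine (Set.countable_range
    (fun c : Nat.Partrec.Code => {m : ℕ | (c.eval m).Dom})).mono ?_
  rintro W hW
  obtain ⟨c, rfl⟩ := CE.exists_code hW
  exact ⟨c, rfl⟩

/-- The closure property of c.e. sets from which all reductions below are obtained: an existential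
search through the axioms of `W`, filtered by a primitive recursive relation. -/
lemma CE.filter {W : Set ℕ} (hW : CE W) {g : ℕ → ℕ} (hg : Primrec g) {Q : ℕ → ℕ → Prop}
    (hQ : PrimrecRel Q) : CE {m | ∃ v, Nat.pair (g m) v ∈ W ∧ Q m v} := by
  obtain ⟨c, rfl⟩ := hW.exists_code
  -- The witness `s` codes both `v` and a bound for the running time of `c`.
  have hev : PrimrecRel (fun m s : ℕ =>
      (Nat.Partrec.Code.evaln s.unpair.2 c (Nat.pair (g m) s.unpair.1)).isSome = true) := by
    refine Primrec.eq.comp (Primrec.option_isSome.comp (Nat.Partrec.Code.primrec_evaln.comp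
      (((primrec_unpair_snd.comp Primrec.snd).pair (Primrec.const c)).pair
        (Primrec₂.natPair.comp (hg.comp Primrec.fst) (primrec_unpair_fst.comp Primrec.snd)))))
      (Primrec.const true)
  have hQ' : PrimrecRel (fun m s : ℕ => Q m s.unpair.1) :=
    hQ.comp Primrec.fst (primrec_unpair_fst.comp Primrec.snd)
  have hboth : PrimrecRel fun m s : ℕ =>
      (Nat.Partrec.Code.evaln s.unpair.2 c (Nat.pair (g m) s.unpair.1)).isSome = true ∧
        Q m s.unpair.1 := PrimrecPred.and hev hQ'
  have h := ce_exists_primrec hboth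
  convert h using 1
  ext m
  simp only [Set.mem_ofPred_eq]
  constructor
  · rintro ⟨v, hv, hq⟩
    obtain ⟨y, hy⟩ := Part.dom_iff_mem.1 hv
    obtain ⟨k, hk⟩ := Nat.Partrec.Code.evaln_complete.1 hy
    refine ⟨Nat.pair v k, ?_, by simpa using hq⟩
    simpa using Option.isSome_iff_exists.2 ⟨y, hk⟩
  · rintro ⟨s, hs, hq⟩
    obtain ⟨y, hy⟩ := Option.isSome_iff_exists.1 hs
    exact ⟨_, Part.dom_iff_mem.2 ⟨y, Nat.Partrec.Code.evaln_sound hy⟩, hq⟩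

lemma lt_of_mem_Dset {u i : ℕ} (h : i ∈ Dset u) : i < u :=
  lt_of_lt_of_le Nat.lt_two_pow_self (Nat.ge_two_pow_of_testBit h)

lemma Dset_finite (u : ℕ) : (Dset u).Finite :=
  (Set.finite_lt_nat u).subset fun _ h => lt_of_mem_Dset h

/-- Every finite set has a canonical index. -/
lemma exists_Dset_eq {s : Set ℕ} (hs : s.Finite) : ∃ u, Dset u = s := by
  classical
  obtain ⟨b, hb⟩ := hs.bddAbove
  refine ⟨Nat.ofBits (fun i : Fin (b + 1) => decide ((i : ℕ) ∈ s)), ?_⟩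
  ext i
  simp only [Dset, Set.mem_ofPred_eq]
  by_cases h : i < b + 1
  · rw [Nat.testBit_ofBits_lt _ _ h]; simp
  · rw [Nat.testBit_ofBits_ge _ _ (by omega)]
    simp only [Bool.false_eq_true, false_iff]
    intro hi
    have := hb hi
    omega

lemma even_mem_oplus {X Y : Set ℕ} {i : ℕ} : 2 * i ∈ oplus X Y ↔ i ∈ X := by
  constructor
  · rintro (⟨j, hj, h⟩ | ⟨j, hj, h⟩) <;> simp only at h
    · obtain rfl : j = i := by omega
      exact hj
    · omega
  · exact fun h => Or.inl ⟨i, h, rfl⟩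

lemma odd_mem_oplus {X Y : Set ℕ} {i : ℕ} : 2 * i + 1 ∈ oplus X Y ↔ i ∈ Y := by
  constructor
  · rintro (⟨j, hj, h⟩ | ⟨j, hj, h⟩) <;> simp only at h
    · omega
    · obtain rfl : j = i := by omega
      exact hj
  · exact fun h => Or.inr ⟨i, h, rfl⟩

lemma oplus_mono_left {X X' Y : Set ℕ} (h : X ⊆ X') : oplus X Y ⊆ oplus X' Y :=
  Set.union_subset_union_left _ (Set.image_mono h)

lemma enumOp_mono {W X X' : Set ℕ} (h : X ⊆ X') : enumOp W X ⊆ enumOp W X' :=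
  fun _ ⟨u, hu, hs⟩ => ⟨u, hu, hs.trans h⟩

/-- Uniformly in `n`, membership in `Φ(Cₙ ⊕ A)` is enumerable from `A` alone when the sets
`Cₙ = {z | R n z}` are uniformly primitive recursive. -/
lemma enumRed_uniform {W A : Set ℕ} (hW : CE W) {g : ℕ → ℕ} (hg : Primrec g) {R : ℕ → ℕ → Prop}
    (hR : PrimrecRel R) : EnumRed {n | g n ∈ enumOp W (oplus {z | R n z} A)} A := by
  have hQ₀ : PrimrecRel (fun (i : ℕ) (y : ℕ × ℕ) => ¬ Nat.testBit y.2 i = true ∨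
      (i % 2 = 0 ∧ R y.1.unpair.1 (i / 2)) ∨
      (i % 2 = 1 ∧ Nat.testBit y.1.unpair.2 (i / 2) = true)) := by
    have hmod : Primrec fun p : ℕ × (ℕ × ℕ) => p.1 % 2 :=
      Primrec.nat_mod.comp Primrec.fst (Primrec.const 2)
    have hdiv : Primrec fun p : ℕ × (ℕ × ℕ) => p.1 / 2 :=
      Primrec.nat_div.comp Primrec.fst (Primrec.const 2)
    have hm : Primrec fun p : ℕ × (ℕ × ℕ) => p.2.1 := Primrec.fst.comp Primrec.snd
    have hv : Primrec fun p : ℕ × (ℕ × ℕ) => p.2.2 := Primrec.snd.comp Primrec.snd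
    exact PrimrecPred.or (primrecRel_testBit.comp hv Primrec.fst).not
      (PrimrecPred.or
        (PrimrecPred.and (Primrec.eq.comp hmod (Primrec.const 0))
          (hR.comp (primrec_unpair_fst.comp hm) hdiv))
        (PrimrecPred.and (Primrec.eq.comp hmod (Primrec.const 1))
          (primrecRel_testBit.comp (primrec_unpair_snd.comp hm) hdiv)))
  -- `m = ⟨n, u⟩` is an axiom if `v` uses axioms from `Cₙ` and its `A`-part is contained in `D_u`.
  have hQ : PrimrecRel (fun m v : ℕ => ∀ i < v, ¬ Nat.testBit v i = true ∨
      (i % 2 = 0 ∧ R m.unpair.1 (i / 2)) ∨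
      (i % 2 = 1 ∧ Nat.testBit m.unpair.2 (i / 2) = true)) :=
    primrecRel_forall_lt hQ₀
  refine ⟨_, hW.filter (hg.comp primrec_unpair_fst) hQ, ?_⟩
  ext n
  simp only [enumOp, Set.mem_ofPred_eq, Nat.unpair_pair]
  constructor
  · rintro ⟨v, hv, hs⟩
    have hfin : {i | 2 * i + 1 ∈ Dset v}.Finite :=
      (Dset_finite v).preimage (f := fun i => 2 * i + 1) fun a _ b _ h => by simpa using h
    obtain ⟨u, hu⟩ := exists_Dset_eq hfin
    refine ⟨u, ⟨v, hv, fun i _ => ?_⟩, ?_⟩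
    · by_cases hi : Nat.testBit v i = true
      · right
        have hmem := hs (show i ∈ Dset v from hi)
        rcases Nat.mod_two_eq_zero_or_one i with h | h
        · left
          rw [show i = 2 * (i / 2) by omega, even_mem_oplus] at hmem
          exact ⟨h, hmem⟩
        · right
          refine ⟨h, ?_⟩
          have : i / 2 ∈ Dset u := by
            rw [hu, Set.mem_ofPred_eq, show 2 * (i / 2) + 1 = i by omega]
            exact hi
          exact this
      · exact Or.inl hi
    · rw [hu]
      exact fun i hi => odd_mem_oplus.1 (hs hi)
  · rintro ⟨u, ⟨v, hv, hs⟩, hu⟩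
    refine ⟨v, hv, fun i hi => ?_⟩
    rcases hs i (lt_of_mem_Dset hi) with h | ⟨h, h'⟩ | ⟨h, h'⟩
    · exact absurd hi h
    · rw [show i = 2 * (i / 2) by omega, even_mem_oplus]
      exact h'
    · rw [show i = 2 * (i / 2) + 1 by omega, odd_mem_oplus]
      exact hu h'

lemma EnumRed.oplus_right {X A : Set ℕ} (h : EnumRed X A) (Γ : Set ℕ) :
    EnumRed X (oplus Γ A) := by
  obtain ⟨W, hW, rfl⟩ := h
  have hQ₀ : PrimrecRel (fun (i : ℕ) (y : ℕ × ℕ) => ¬ Nat.testBit y.2 i = true ∨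
      Nat.testBit y.1.unpair.2 (2 * i + 1) = true) :=
    PrimrecPred.or
      (primrecRel_testBit.comp (Primrec.snd.comp Primrec.snd) Primrec.fst).not
      (primrecRel_testBit.comp (primrec_unpair_snd.comp (Primrec.fst.comp Primrec.snd))
        (Primrec.succ.comp (Primrec.nat_mul.comp (Primrec.const 2) Primrec.fst)))
  have hQ : PrimrecRel (fun m v : ℕ => ∀ i < v, ¬ Nat.testBit v i = true ∨
      Nat.testBit m.unpair.2 (2 * i + 1) = true) :=
    primrecRel_forall_lt hQ₀
  refine ⟨_, hW.filter primrec_unpair_fst hQ, ?_⟩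
  ext n
  simp only [enumOp, Set.mem_ofPred_eq, Nat.unpair_pair]
  constructor
  · rintro ⟨v, hv, hs⟩
    obtain ⟨u, hu⟩ := exists_Dset_eq ((Dset_finite v).image fun i => 2 * i + 1)
    refine ⟨u, ⟨v, hv, fun i _ => ?_⟩, ?_⟩
    · by_cases hi : Nat.testBit v i = true
      · right
        have : 2 * i + 1 ∈ Dset u := by
          rw [hu]
          exact ⟨i, hi, rfl⟩
        exact this
      · exact Or.inl hi
    · rw [hu]
      rintro _ ⟨i, hi, rfl⟩
      exact odd_mem_oplus.2 (hs hi)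
  · rintro ⟨u, ⟨v, hv, hs⟩, hu⟩
    refine ⟨v, hv, fun i hi => ?_⟩
    rcases hs i (lt_of_mem_Dset hi) with h | h
    · exact absurd hi h
    · exact odd_mem_oplus.1 (hu h)

lemma EnumRed.of_oplus_left {X Y A : Set ℕ} (h : EnumRed (oplus X Y) A) : EnumRed X A := by
  obtain ⟨W, hW, h⟩ := h
  refine ⟨_, hW.filter (Primrec.nat_mul.comp (Primrec.const 2) primrec_unpair_fst)
    (Q := fun m v => m.unpair.2 = v)
    (Primrec.eq.comp (primrec_unpair_snd.comp Primrec.fst) Primrec.snd), ?_⟩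
  ext n
  rw [← even_mem_oplus (Y := Y), h]
  simp [enumOp]

/-! ### Conditions and genericity -/

/-- A forcing condition, describing the sets `Γ` with `pos ⊆ Γ ⊆ allowed`. -/
structure Cond where
  /-- The axioms that `Γ` must contain. -/
  pos : Set ℕ
  /-- The axioms that `Γ` may contain. -/
  allowed : Set ℕ
  finite : pos.Finite
  sub : pos ⊆ allowed
  prim : PrimrecPred fun z => z ∈ allowed
  full : ∃ m, ∀ y ≥ m, ∀ u, Nat.pair y u ∈ allowed

namespace Cond

/-- `q.Le p` says that the condition `q` is stronger than `p`. -/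
def Le (q p : Cond) : Prop := p.pos ⊆ q.pos ∧ q.allowed ⊆ p.allowed

/-- `q.Compat Γ` says that `Γ` is one of the sets described by `q`. -/
def Compat (q : Cond) (Γ : Set ℕ) : Prop := q.pos ⊆ Γ ∧ Γ ⊆ q.allowed

/-- A requirement is dense if every condition has a stronger one all of whose compatible sets
satisfy it. -/
def Dense (P : Set (Set ℕ)) : Prop := ∀ p : Cond, ∃ q : Cond, q.Le p ∧ ∀ Γ, q.Compat Γ → Γ ∈ P

/-- The weakest condition. -/
def top : Cond where
  pos := ∅
  allowed := Set.univ
  finite := Set.finite_empty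
  sub := Set.empty_subset _
  prim := (Primrec.eq.comp Primrec.id Primrec.id : PrimrecPred fun z : ℕ => z = z).of_eq (by simp)
  full := ⟨0, fun _ _ _ => trivial⟩

lemma exists_generic {S : Set (Set (Set ℕ))} (hS : S.Countable) (hd : ∀ P ∈ S, Dense P) :
    ∃ Γ : Set ℕ, ∀ P ∈ S, Γ ∈ P := by
  rcases S.eq_empty_or_nonempty with rfl | hne
  · exact ⟨∅, by simp⟩
  obtain ⟨r, rfl⟩ := hS.exists_eq_range hne
  choose next hle hforce using fun n => hd (r n) ⟨n, rfl⟩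
  let c : ℕ → Cond := fun n => Nat.rec top (fun n p => next n p) n
  have hpos : Monotone fun n => (c n).pos := monotone_nat_of_le_succ fun n => (hle n (c n)).1
  have hall : Antitone fun n => (c n).allowed := antitone_nat_of_succ_le fun n => (hle n (c n)).2
  refine ⟨⋃ n, (c n).pos, ?_⟩
  rintro _ ⟨n, rfl⟩
  refine hforce n (c n) _ ⟨Set.subset_iUnion (fun n => (c n).pos) (n + 1), ?_⟩
  refine Set.iUnion_subset fun k z hz => ?_
  exact hall (le_max_right k (n + 1)) ((c _).sub (hpos (le_max_left k (n + 1)) hz))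

/-- A number `x` such that nothing has been decided about the axioms `⟨x, u⟩`. -/
lemma exists_fresh (p : Cond) :
    ∃ x, (∀ u, Nat.pair x u ∈ p.allowed) ∧ ∀ z ∈ p.pos, z.unpair.1 ≠ x := by
  obtain ⟨m, hm⟩ := p.full
  obtain ⟨b, hb⟩ := p.finite.bddAbove
  refine ⟨max m (b + 1), hm _ (le_max_left _ _), fun z hz h => ?_⟩
  have h1 := hb hz
  have h2 := Nat.unpair_left_le z
  have h3 := le_max_right m (b + 1)
  omega

/-- Add a finite set of allowed axioms to the positive part. -/
def addPos (p : Cond) (s : Set ℕ) (hs : s.Finite) (hsub : s ⊆ p.allowed) : Cond where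
  pos := p.pos ∪ s
  allowed := p.allowed
  finite := p.finite.union hs
  sub := Set.union_subset p.sub hsub
  prim := p.prim
  full := p.full

lemma addPos_le (p : Cond) {s : Set ℕ} (hs : s.Finite) (hsub : s ⊆ p.allowed) :
    (p.addPos s hs hsub).Le p :=
  ⟨Set.subset_union_left, subset_rfl⟩

/-- For an undecided `x`, allow from now on only those axioms `⟨x, u⟩` with `n ∈ D_u`. -/
def restrict (p : Cond) (x n : ℕ) (hx : ∀ z ∈ p.pos, z.unpair.1 ≠ x) : Cond where
  pos := p.pos
  allowed := {z | z ∈ p.allowed ∧ (z.unpair.1 ≠ x ∨ Nat.testBit z.unpair.2 n = true)}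
  finite := p.finite
  sub := fun z hz => ⟨p.sub hz, Or.inl (hx z hz)⟩
  prim := p.prim.and (PrimrecPred.or
    (Primrec.eq.comp primrec_unpair_fst (Primrec.const x)).not
    (primrecRel_testBit.comp primrec_unpair_snd (Primrec.const n)))
  full := by
    obtain ⟨m, hm⟩ := p.full
    refine ⟨max m (x + 1), fun y hy u => ⟨hm y (le_trans (le_max_left _ _) hy) u, Or.inl ?_⟩⟩
    have := le_trans (le_max_right m (x + 1)) hy
    rw [Nat.unpair_pair]
    exact (by omega : y ≠ x)

/-- For an undecided `x`, forbid all axioms `⟨x, u⟩`. -/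
def forbid (p : Cond) (x : ℕ) (hx : ∀ z ∈ p.pos, z.unpair.1 ≠ x) : Cond where
  pos := p.pos
  allowed := {z | z ∈ p.allowed ∧ z.unpair.1 ≠ x}
  finite := p.finite
  sub := fun z hz => ⟨p.sub hz, hx z hz⟩
  prim := p.prim.and (Primrec.eq.comp primrec_unpair_fst (Primrec.const x)).not
  full := by
    obtain ⟨m, hm⟩ := p.full
    refine ⟨max m (x + 1), fun y hy u => ⟨hm y (le_trans (le_max_left _ _) hy) u, ?_⟩⟩
    have := le_trans (le_max_right m (x + 1)) hy
    rw [Nat.unpair_pair]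
    exact (by omega : y ≠ x)

/-- If `x ∈ Φ(C ⊕ A)` for the set `C` of allowed axioms, finitely many of these axioms force
`x ∈ Φ(Γ ⊕ A)`. -/
lemma force_mem (p : Cond) {W A : Set ℕ} {x : ℕ} (h : x ∈ enumOp W (oplus p.allowed A)) :
    ∃ q : Cond, q.Le p ∧ ∀ Γ, q.Compat Γ → x ∈ enumOp W (oplus Γ A) := by
  obtain ⟨v, hv, hs⟩ := h
  have hfin : {i | 2 * i ∈ Dset v}.Finite :=
    (Dset_finite v).preimage (f := fun i => 2 * i) fun a _ b _ h => by simpa using h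
  refine ⟨p.addPos _ hfin fun i hi => even_mem_oplus.1 (hs hi), p.addPos_le _ _, ?_⟩
  refine fun Γ hΓ => ⟨v, hv, fun i hi => ?_⟩
  rcases Nat.mod_two_eq_zero_or_one i with h | h
  · obtain ⟨j, rfl⟩ : ∃ j, i = 2 * j := ⟨i / 2, by omega⟩
    exact even_mem_oplus.2 (hΓ.1 (Or.inr hi))
  · obtain ⟨j, rfl⟩ : ∃ j, i = 2 * j + 1 := ⟨i / 2, by omega⟩
    exact odd_mem_oplus.2 (odd_mem_oplus.1 (hs hi))

/-! ### Density of the requirements -/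

lemma force_ne {X W A : Set ℕ} (hX : ¬ EnumRed X A) (hW : CE W) :
    Dense {Γ | X ≠ enumOp W (oplus Γ A)} := by
  intro p
  have hZ : EnumRed (enumOp W (oplus p.allowed A)) A :=
    enumRed_uniform hW (g := fun n => n) Primrec.id (R := fun _ z => z ∈ p.allowed)
      (p.prim.comp Primrec.snd)
  by_cases hsub : enumOp W (oplus p.allowed A) ⊆ X
  · have hnot : ¬ X ⊆ enumOp W (oplus p.allowed A) := fun h => hX (h.antisymm hsub ▸ hZ)
    obtain ⟨x, hx, hxZ⟩ := Set.not_subset.1 hnot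
    refine ⟨p, ⟨subset_rfl, subset_rfl⟩, fun Γ hΓ h => hxZ ?_⟩
    rw [h] at hx
    exact enumOp_mono (oplus_mono_left hΓ.2) hx
  · obtain ⟨x, hx, hxX⟩ := Set.not_subset.1 hsub
    obtain ⟨q, hq, hf⟩ := p.force_mem hx
    exact ⟨q, hq, fun Γ hΓ h => hxX (h ▸ hf Γ hΓ)⟩

lemma force_image_ne {W A B : Set ℕ} (hBA : ¬ EnumRed B A) (hW : CE W) :
    Dense {Γ | enumOp Γ B ≠ enumOp W (oplus Γ A)} := by
  intro p
  obtain ⟨x, hall, hx⟩ := p.exists_fresh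
  have hS : EnumRed {n | x ∈ enumOp W (oplus (p.restrict x n hx).allowed A)} A := by
    refine enumRed_uniform hW (g := fun _ => x) (Primrec.const x)
      (R := fun n z => z ∈ p.allowed ∧ (z.unpair.1 ≠ x ∨ Nat.testBit z.unpair.2 n = true)) ?_
    exact PrimrecPred.and (p.prim.comp Primrec.snd) (PrimrecPred.or
      (Primrec.eq.comp (primrec_unpair_fst.comp Primrec.snd) (Primrec.const x)).not
      (primrecRel_testBit.comp (primrec_unpair_snd.comp Primrec.snd) Primrec.fst))
  by_cases hsub : {n | x ∈ enumOp W (oplus (p.restrict x n hx).allowed A)} ⊆ B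
  · have hnot : ¬ B ⊆ {n | x ∈ enumOp W (oplus (p.restrict x n hx).allowed A)} :=
      fun h => hBA (h.antisymm hsub ▸ hS)
    obtain ⟨n, hnB, hnS⟩ := Set.not_subset.1 hnot
    have hax : {Nat.pair x (2 ^ n)} ⊆ (p.restrict x n hx).allowed := by
      rintro _ rfl
      exact ⟨hall _, Or.inr (by simp [Nat.testBit_two_pow_self])⟩
    refine ⟨(p.restrict x n hx).addPos _ (Set.finite_singleton _) hax,
      ⟨Set.subset_union_left, fun z hz => hz.1⟩, fun Γ hΓ h => hnS ?_⟩
    have hmem : x ∈ enumOp Γ B := by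
      refine ⟨2 ^ n, hΓ.1 (Or.inr rfl), fun i hi => ?_⟩
      obtain rfl : i = n := by simpa [Dset, Nat.testBit_two_pow] using hi
      exact hnB
    rw [h] at hmem
    exact enumOp_mono (oplus_mono_left hΓ.2) hmem
  · obtain ⟨n, hnS, hnB⟩ := Set.not_subset.1 hsub
    obtain ⟨q, hq, hf⟩ := (p.restrict x n hx).force_mem hnS
    refine ⟨q, ⟨hq.1, fun z hz => (hq.2 hz).1⟩, fun Γ hΓ h => ?_⟩
    have hmem := hf Γ hΓ
    rw [← h] at hmem
    obtain ⟨u, hu, huB⟩ := hmem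
    rcases (hq.2 (hΓ.2 hu)).2 with hcol | hcol
    · simp at hcol
    · exact hnB (huB (by simpa [Dset] using hcol))

/-- If `T Γ` gets the element `t x` once `⟨x, ∅⟩` is put into `Γ`, and never gets it once the axioms
`⟨x, u⟩` are forbidden, then `T Γ` can be made to differ from any given set. -/
lemma force_diag (T : Set ℕ → Set ℕ) (t : ℕ → ℕ)
    (hin : ∀ Γ x, Nat.pair x 0 ∈ Γ → t x ∈ T Γ)
    (hout : ∀ Γ x, (∀ u, Nat.pair x u ∉ Γ) → t x ∉ T Γ) (Y : Set ℕ) :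
    Dense {Γ | T Γ ≠ Y} := by
  intro p
  obtain ⟨x, hall, hx⟩ := p.exists_fresh
  by_cases hY : t x ∈ Y
  · refine ⟨p.forbid x hx, ⟨subset_rfl, fun z hz => hz.1⟩, fun Γ hΓ h => ?_⟩
    refine hout Γ x (fun u hu => ?_) (h ▸ hY)
    exact (hΓ.2 hu).2 (by simp)
  · have hax : {Nat.pair x 0} ⊆ p.allowed := by
      rintro _ rfl
      exact hall 0
    refine ⟨p.addPos _ (Set.finite_singleton _) hax, p.addPos_le _ _, fun Γ hΓ h => hY ?_⟩
    exact h ▸ hin Γ x (hΓ.1 (Or.inr rfl))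

lemma force_self_ne (Y : Set ℕ) : Dense {Γ | Γ ≠ Y} :=
  force_diag (fun Γ => Γ) (fun x => Nat.pair x 0) (fun _ _ h => h) (fun _ _ h => h 0) Y

lemma force_image_ne_set (B Y : Set ℕ) : Dense {Γ | enumOp Γ B ≠ Y} :=
  force_diag (fun Γ => enumOp Γ B) (fun x => x)
    (fun _ _ h => ⟨0, h, fun i hi => by simp [Dset] at hi⟩)
    (fun _ _ h ⟨u, hu, _⟩ => h u hu) Y

end Cond

/-- The forcing lemma: given `𝓘` countable downwards `≤ₑ`-closed, `𝓖` countable,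
disjoint from `𝓘` and `≡ₑ`-closed, and `A, B ∈ 𝓘` with `B ≰ₑ A`, there is a set
`Γ` (acting as a generalized enumeration operator) with
(0) `Γ ⊕ A ≰ₑ A`; (1) for `X ∈ 𝓘`, `X ≤ₑ Γ ⊕ A ↔ X ≤ₑ A`;
(2) for `X ∈ 𝓖`, `X ≰ₑ Γ ⊕ A`; (3) `Γ(B) ∉ 𝓘`; (4) `Γ(B) ≰ₑ Γ ⊕ A`. -/
theorem generic_operator_extension (I G : Set (Set ℕ)) (A B : Set ℕ)
    (hIc : I.Countable) (hId : DownClosedE I)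
    (hGc : G.Countable) (hGI : ∀ X ∈ G, X ∉ I) (hGe : EClosedEq G)
    (hAI : A ∈ I) (hBI : B ∈ I) (hBA : ¬ EnumRed B A) :
    ∃ Γ : Set ℕ,
      ¬ EnumRed (oplus Γ A) A ∧
      (∀ X ∈ I, (EnumRed X (oplus Γ A) ↔ EnumRed X A)) ∧
      (∀ X ∈ G, ¬ EnumRed X (oplus Γ A)) ∧
      enumOp Γ B ∉ I ∧
      ¬ EnumRed (enumOp Γ B) (oplus Γ A) := by
  let R₁ : Set (Set (Set ℕ)) :=
    (fun XW : Set ℕ × Set ℕ => {Γ | XW.1 ≠ enumOp XW.2 (oplus Γ A)}) ''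
      ({X | X ∈ I ∪ G ∧ ¬ EnumRed X A} ×ˢ {W | CE W})
  let R₂ : Set (Set (Set ℕ)) :=
    (fun W => {Γ | enumOp Γ B ≠ enumOp W (oplus Γ A)}) '' {W | CE W}
  let R₃ : Set (Set (Set ℕ)) := (fun Y => {Γ | enumOp Γ B ≠ Y}) '' I
  let R₄ : Set (Set (Set ℕ)) := (fun Y => {Γ | Γ ≠ Y}) '' I
  have hc : (R₁ ∪ R₂ ∪ R₃ ∪ R₄).Countable :=
    ((((((hIc.union hGc).mono fun _ h => h.1).prod countable_ce).image _).union
      (countable_ce.image _)).union (hIc.image _)).union (hIc.image _)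
  obtain ⟨Γ, hΓ⟩ := Cond.exists_generic hc (by
    rintro _ (((⟨⟨X, W⟩, ⟨⟨_, hX⟩, hW⟩, rfl⟩ | ⟨W, hW, rfl⟩) | ⟨Y, _, rfl⟩) | ⟨Y, _, rfl⟩)
    · exact Cond.force_ne hX hW
    · exact Cond.force_image_ne hBA hW
    · exact Cond.force_image_ne_set B Y
    · exact Cond.force_self_ne Y)
  have h₁ : ∀ X ∈ I ∪ G, EnumRed X (oplus Γ A) → EnumRed X A := by
    rintro X hX ⟨W, hW, h⟩
    by_contra hXA
    exact hΓ _ (Or.inl (Or.inl (Or.inl ⟨(X, W), ⟨⟨hX, hXA⟩, hW⟩, rfl⟩))) h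
  refine ⟨Γ, fun h => ?_, fun X hX => ⟨h₁ X (Or.inl hX), fun h => h.oplus_right Γ⟩,
    fun X hX h => hGI X hX (hId X A (h₁ X (Or.inr hX) h) hAI), fun h => ?_, ?_⟩
  · exact hΓ _ (Or.inr ⟨Γ, hId Γ A h.of_oplus_left hAI, rfl⟩) rfl
  · exact hΓ _ (Or.inl (Or.inr ⟨_, h, rfl⟩)) rfl
  · rintro ⟨W, hW, h⟩
    exact hΓ _ (Or.inl (Or.inl (Or.inr ⟨W, hW, rfl⟩))) h
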